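/- Let 𝒞 be a finite constraint set over base type variables {τ_i}, and let G be the labeled graph whose nodes are the derived type variables appearing in 𝒞 together with all of their prefixes, with a labeled edge n(α) →^ℓ n(α.ℓ) for each such derived type variable α.ℓ. Let ∼ be the least equivalence relation on the nodes of G such that n(α) ∼ n(β) whenever (α ⊑ β) ∈ 𝒞, and n(α') ∼ n(β') whenever there are edges n(α) →^ℓ n(α') and n(β) →^{ℓ'} n(β') with n(α) ∼ n(β) and either ℓ = ℓ' or (ℓ = .load and ℓ' = .store). Then for every word u ∈ Σ*, there exists a path through the quotient graph G/∼ with label sequence u starting at the equivalence class of n(τ_i) if and only if 𝒞 ⊢ VAR τ_i.u. -/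

import Mathlib

/-- The two-element sign monoid `{⊕, ⊖}` of variances. -/
inductive Sign : Type where
  | pos
  | neg
deriving DecidableEq, Repr

/-- Multiplication in the sign monoid (`⊕` is the identity, `⊖ · ⊖ = ⊕`). -/
def Sign.mul : Sign → Sign → Sign
  | .pos, s => s
  | .neg, .pos => .neg
  | .neg, .neg => .pos

/-- Variance of a word in `Σ*`: `⟨ε⟩ = ⊕`, `⟨xw⟩ = ⟨x⟩·⟨w⟩`. -/
def wordSign {L : Type} (sgn : L → Sign) : List L → Sign
  | [] => .pos
  | x :: w => (sgn x).mul (wordSign sgn w)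

/-- A derived type variable `α.w` with base type variable `α ∈ 𝒱` and word `w ∈ Σ*`. -/
structure DTV (V L : Type) : Type where
  base : V
  word : List L

/-- Appending a single field label to a derived type variable: `α.ℓ`. -/
def DTV.app {V L : Type} (α : DTV V L) (ℓ : L) : DTV V L :=
  ⟨α.base, α.word ++ [ℓ]⟩

/-- A constraint: either `VAR X` or `X ⊑ Y` for derived type variables. -/
inductive Constraint (V L : Type) : Type where
  | var : DTV V L → Constraint V L
  | sub : DTV V L → DTV V L → Constraint V L

/-- Entailment `𝒞 ⊢ c`: the least relation containing `𝒞` and closed under the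
deduction rules T-Left, T-Right, T-InheritL, T-InheritR, T-Prefix, S-Refl,
S-Trans, S-Field⊕, S-Field⊖ and S-Pointer. -/
inductive Entails {V L : Type} (sgn : L → Sign) (load store : L)
    (C : Set (Constraint V L)) : Constraint V L → Prop where
  | ax {c} : c ∈ C → Entails sgn load store C c
  | tLeft {α β} : Entails sgn load store C (.sub α β) →
      Entails sgn load store C (.var α)
  | tRight {α β} : Entails sgn load store C (.sub α β) →
      Entails sgn load store C (.var β)
  | tInheritL {α β : DTV V L} {ℓ} : Entails sgn load store C (.sub α β) →
      Entails sgn load store C (.var (α.app ℓ)) →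
      Entails sgn load store C (.var (β.app ℓ))
  | tInheritR {α β : DTV V L} {ℓ} : Entails sgn load store C (.sub α β) →
      Entails sgn load store C (.var (β.app ℓ)) →
      Entails sgn load store C (.var (α.app ℓ))
  | tPrefix {α : DTV V L} {ℓ} : Entails sgn load store C (.var (α.app ℓ)) →
      Entails sgn load store C (.var α)
  | sRefl {α} : Entails sgn load store C (.var α) →
      Entails sgn load store C (.sub α α)
  | sTrans {α β γ} : Entails sgn load store C (.sub α β) →
      Entails sgn load store C (.sub β γ) →
      Entails sgn load store C (.sub α γ)
  | sFieldPos {α β : DTV V L} {ℓ} : Entails sgn load store C (.sub α β) →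
      Entails sgn load store C (.var (β.app ℓ)) → sgn ℓ = .pos →
      Entails sgn load store C (.sub (α.app ℓ) (β.app ℓ))
  | sFieldNeg {α β : DTV V L} {ℓ} : Entails sgn load store C (.sub α β) →
      Entails sgn load store C (.var (β.app ℓ)) → sgn ℓ = .neg →
      Entails sgn load store C (.sub (β.app ℓ) (α.app ℓ))
  | sPointer {α : DTV V L} : Entails sgn load store C (.var (α.app load)) →
      Entails sgn load store C (.var (α.app store)) →
      Entails sgn load store C (.sub (α.app store) (α.app load))

/-- `𝒞` is closed under T-Left, T-Right and T-Prefix. -/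
def ClosedTLRP {V L : Type} (C : Set (Constraint V L)) : Prop :=
  (∀ α β : DTV V L, Constraint.sub α β ∈ C →
      Constraint.var α ∈ C ∧ Constraint.var β ∈ C) ∧
  (∀ (α : DTV V L) (ℓ : L), Constraint.var (α.app ℓ) ∈ C →
      Constraint.var α ∈ C)

/-- A derived type variable occurring (syntactically) in a constraint. -/
def InConstraint {V L : Type} (α : DTV V L) : Constraint V L → Prop
  | .var β => α = β
  | .sub β γ => α = β ∨ α = γ

/-- The nodes of the graph `G`: the derived type variables appearing in `𝒞`
together with all of their prefixes. -/
def Mentioned {V L : Type} (C : Set (Constraint V L)) : Set (DTV V L) :=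
  {α | ∃ c ∈ C, ∃ β : DTV V L, InConstraint β c ∧
      α.base = β.base ∧ α.word <+: β.word}

/-- The labeled edges of `G`: `n(α) →^ℓ n(α.ℓ)` for each derived type
variable `α.ℓ` among the nodes. -/
def GEdge {V L : Type} (C : Set (Constraint V L))
    (α : DTV V L) (ℓ : L) (β : DTV V L) : Prop :=
  β ∈ Mentioned C ∧ β = α.app ℓ

/-- The least equivalence relation `∼` on the nodes of `G` such that
`n(α) ∼ n(β)` whenever `(α ⊑ β) ∈ 𝒞`, and `n(α') ∼ n(β')` whenever there are
edges `n(α) →^ℓ n(α')` and `n(β) →^{ℓ'} n(β')` with `n(α) ∼ n(β)` and either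
`ℓ = ℓ'` or (`ℓ = .load` and `ℓ' = .store`). -/
inductive GEquiv {V L : Type} (load store : L) (C : Set (Constraint V L)) :
    DTV V L → DTV V L → Prop where
  | base {α β : DTV V L} : Constraint.sub α β ∈ C → GEquiv load store C α β
  | congr {α β α' β' : DTV V L} {ℓ ℓ' : L} :
      GEdge C α ℓ α' → GEdge C β ℓ' β' → GEquiv load store C α β →
      (ℓ = ℓ' ∨ (ℓ = load ∧ ℓ' = store)) → GEquiv load store C α' β'
  | refl {α : DTV V L} : α ∈ Mentioned C → GEquiv load store C α α
  | symm {α β : DTV V L} : GEquiv load store C α β → GEquiv load store C β α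
  | trans {α β γ : DTV V L} : GEquiv load store C α β →
      GEquiv load store C β γ → GEquiv load store C α γ

/-- A path through the quotient graph `G/∼` with a given label sequence,
starting at the equivalence class of a node: a sequence of classes such that
each consecutive pair is connected by an edge of `G`, with the given label,
from some node of the one class to some node of the next. -/
inductive QPath {V L : Type} (load store : L) (C : Set (Constraint V L)) :
    DTV V L → List L → Prop where
  | nil {α : DTV V L} : α ∈ Mentioned C → QPath load store C α []
  | cons {α β γ : DTV V L} {ℓ : L} {w : List L} :
      GEquiv load store C α β → GEdge C β ℓ γ → QPath load store C γ w →
      QPath load store C α (ℓ :: w)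

/-!
Call two derived type variables `X`, `Y` indistinguishable for a predicate `P` when `P X.w` and
`P Y.w` are equivalent for every word `w`.

If `P` is derivability of `VAR`, then `X ⊑ Y` makes `X` and `Y` indistinguishable, since the field
rules propagate comparability of `X` and `Y` to each common field; hence so does `X ∼ Y`, and
reading a path from its end backwards yields a derivation of `VAR`.

If `P X` says that `X` spells out a path of `G/∼` from the class of its base variable, then reading
`VAR X` as `P X` and `X ⊑ Y` as indistinguishability gives a model of the deduction rules. The
constraints in `𝒞` hold in it because `G/∼` is deterministic: the paths extending a node `X` are
exactly those starting at the class of `X`. S-Pointer holds because the `.load`- and `.store`-edges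
leaving a class lead to the same class.
-/

section

variable {V L : Type}

namespace DTV

/-- The derived type variable `α.w`, for a word `w` of field labels. -/
def append (α : DTV V L) (w : List L) : DTV V L :=
  ⟨α.base, α.word ++ w⟩

theorem append_nil (α : DTV V L) : α.append [] = α := by
  simp [append]

theorem append_cons (α : DTV V L) (ℓ : L) (w : List L) :
    α.append (ℓ :: w) = (α.app ℓ).append w := by
  simp [append, app]

theorem append_concat (α : DTV V L) (w : List L) (ℓ : L) :
    α.append (w ++ [ℓ]) = (α.append w).app ℓ := by
  simp [append, app]

end DTV

/-- `X` and `Y` are indistinguishable by `P`: they have the same extensions satisfying `P`. This is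
the Nerode equivalence of the set of derived type variables given by `P`. -/
def SameExtensions (P : DTV V L → Prop) (X Y : DTV V L) : Prop :=
  ∀ w, P (X.append w) ↔ P (Y.append w)

namespace SameExtensions

variable {P : DTV V L → Prop} {X Y Z : DTV V L}

theorem refl (X : DTV V L) : SameExtensions P X X :=
  fun _ => Iff.rfl

theorem symm (h : SameExtensions P X Y) : SameExtensions P Y X :=
  fun w => (h w).symm

theorem trans (h : SameExtensions P X Y) (h' : SameExtensions P Y Z) : SameExtensions P X Z :=
  fun w => (h w).trans (h' w)

theorem iff (h : SameExtensions P X Y) : P X ↔ P Y := by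
  simpa only [DTV.append_nil] using h []

theorem app (h : SameExtensions P X Y) (ℓ : L) : SameExtensions P (X.app ℓ) (Y.app ℓ) := by
  intro w
  simpa only [DTV.append_cons] using h (ℓ :: w)

end SameExtensions

/-- The interpretation of constraints given by a predicate `P`: `VAR X` means `P X`, and `X ⊑ Y`
means that `X` and `Y` satisfy `P` and are indistinguishable by it. The direction of `⊑` is
forgotten. -/
def Constraint.HoldsIn (P : DTV V L → Prop) : Constraint V L → Prop
  | .var X => P X
  | .sub X Y => P X ∧ SameExtensions P X Y

variable {sgn : L → Sign} {load store : L} {C : Set (Constraint V L)}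

theorem Entails.holdsIn {P : DTV V L → Prop} (hC : ∀ c ∈ C, c.HoldsIn P)
    (hprefix : ∀ (X : DTV V L) (ℓ : L), P (X.app ℓ) → P X)
    (hpointer : ∀ X : DTV V L, P (X.app load) → P (X.app store) →
      SameExtensions P (X.app store) (X.app load))
    {c : Constraint V L} (h : Entails sgn load store C c) : c.HoldsIn P := by
  induction h with
  | ax hc => exact hC _ hc
  | tLeft _ ih => exact ih.1
  | tRight _ ih => exact ih.2.iff.1 ih.1
  | tInheritL _ _ hsub hvar => exact (hsub.2.app _).iff.1 hvar
  | tInheritR _ _ hsub hvar => exact (hsub.2.app _).iff.2 hvar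
  | tPrefix _ ih => exact hprefix _ _ ih
  | sRefl _ ih => exact ⟨ih, .refl _⟩
  | sTrans _ _ ih ih' => exact ⟨ih.1, ih.2.trans ih'.2⟩
  | sFieldPos _ _ _ hsub hvar => exact ⟨(hsub.2.app _).iff.2 hvar, hsub.2.app _⟩
  | sFieldNeg _ _ _ hsub hvar => exact ⟨hvar, (hsub.2.app _).symm⟩
  | sPointer _ _ hload hstore => exact ⟨hstore, hpointer _ hload hstore⟩

section Mentioned

variable {α β : DTV V L}

theorem mentioned_of_inConstraint {c : Constraint V L} (hc : c ∈ C) (h : InConstraint α c) :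
    α ∈ Mentioned C :=
  ⟨c, hc, α, h, rfl, List.prefix_rfl⟩

theorem mentioned_of_mentioned_app {ℓ : L} (h : α.app ℓ ∈ Mentioned C) : α ∈ Mentioned C := by
  obtain ⟨c, hc, β, hβ, hbase, hword⟩ := h
  exact ⟨c, hc, β, hβ, hbase, (List.prefix_append _ _).trans hword⟩

theorem exists_append_inConstraint_of_mentioned (h : α ∈ Mentioned C) :
    ∃ w, ∃ c ∈ C, InConstraint (α.append w) c := by
  obtain ⟨c, hc, ⟨_, _⟩, hβ, rfl, w, rfl⟩ := h
  exact ⟨w, c, hc, hβ⟩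

theorem GEquiv.mentioned (h : GEquiv load store C α β) : α ∈ Mentioned C ∧ β ∈ Mentioned C := by
  induction h with
  | base h =>
    exact ⟨mentioned_of_inConstraint h (.inl rfl), mentioned_of_inConstraint h (.inr rfl)⟩
  | congr hα hβ => exact ⟨hα.1, hβ.1⟩
  | refl h => exact ⟨h, h⟩
  | symm _ ih => exact ih.symm
  | trans _ _ ih ih' => exact ⟨ih.1, ih'.2⟩

end Mentioned

namespace Entails

variable {α β : DTV V L} {ℓ : L} {w : List L}

theorem var_of_append (h : Entails sgn load store C (.var (α.append w))) :
    Entails sgn load store C (.var α) := by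
  induction w using List.reverseRecOn with
  | nil => rwa [DTV.append_nil] at h
  | append_singleton w ℓ ih =>
    rw [DTV.append_concat] at h
    exact ih h.tPrefix

theorem var_of_inConstraint {c : Constraint V L} (hc : c ∈ C) (h : InConstraint α c) :
    Entails sgn load store C (.var α) := by
  cases c with
  | var β =>
    obtain rfl : α = β := h
    exact .ax hc
  | sub β γ =>
    obtain rfl | rfl : α = β ∨ α = γ := h
    · exact .tLeft (.ax hc)
    · exact .tRight (.ax hc)

theorem var_of_mentioned (h : α ∈ Mentioned C) : Entails sgn load store C (.var α) := by
  obtain ⟨_, _, hc, hα⟩ := exists_append_inConstraint_of_mentioned h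
  exact (var_of_inConstraint hc hα).var_of_append

theorem var_app_iff (h : Entails sgn load store C (.sub α β)) :
    Entails sgn load store C (.var (α.app ℓ)) ↔ Entails sgn load store C (.var (β.app ℓ)) :=
  ⟨h.tInheritL, h.tInheritR⟩

theorem sub_app_or_sub_app (h : Entails sgn load store C (.sub α β))
    (hβ : Entails sgn load store C (.var (β.app ℓ))) :
    Entails sgn load store C (.sub (α.app ℓ) (β.app ℓ)) ∨
      Entails sgn load store C (.sub (β.app ℓ) (α.app ℓ)) := by
  cases hℓ : sgn ℓ with
  | pos => exact .inl (h.sFieldPos hβ hℓ)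
  | neg => exact .inr (h.sFieldNeg hβ hℓ)

theorem sameExtensions (h : Entails sgn load store C (.sub α β)) :
    SameExtensions (fun X => Entails sgn load store C (.var X)) α β := by
  intro w
  induction w generalizing α β with
  | nil =>
    simp only [DTV.append_nil]
    exact iff_of_true h.tLeft h.tRight
  | cons ℓ w ih =>
    simp only [DTV.append_cons]
    by_cases hβ : Entails sgn load store C (.var (β.app ℓ))
    · obtain hαβ | hβα := h.sub_app_or_sub_app hβ
      · exact ih hαβ
      · exact (ih hβα).symm
    · exact iff_of_false (fun hw => hβ (h.var_app_iff.1 hw.var_of_append))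
        (fun hw => hβ hw.var_of_append)

end Entails

theorem GEquiv.sameExtensions {α β : DTV V L} (h : GEquiv load store C α β) :
    SameExtensions (fun X => Entails sgn load store C (.var X)) α β := by
  induction h with
  | base h => exact Entails.sameExtensions (.ax h)
  | @congr α β _ _ ℓ _ hα hβ _ hℓ ih =>
    obtain ⟨hα, rfl⟩ := hα
    obtain ⟨hβ, rfl⟩ := hβ
    obtain rfl | ⟨rfl, rfl⟩ := hℓ
    · exact ih.app ℓ
    · have hload := (ih.app ℓ).iff.1 (Entails.var_of_mentioned hα)
      have hpointer := Entails.sPointer hload (Entails.var_of_mentioned hβ)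
      exact (ih.app ℓ).trans hpointer.sameExtensions.symm
  | refl => exact .refl _
  | symm _ ih => exact ih.symm
  | trans _ _ ih ih' => exact ih.trans ih'

namespace QPath

variable {α β γ : DTV V L} {ℓ : L} {u w : List L}

theorem entails_var (h : QPath load store C α w) :
    Entails sgn load store C (.var (α.append w)) := by
  induction h with
  | nil h =>
    rw [DTV.append_nil]
    exact Entails.var_of_mentioned h
  | cons hαβ hβγ _ ih =>
    obtain ⟨_, rfl⟩ := hβγ
    rw [← DTV.append_cons] at ih
    exact (hαβ.sameExtensions _).2 ih

theorem mentioned (h : QPath load store C α w) : α ∈ Mentioned C := by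
  cases h with
  | nil hα => exact hα
  | cons hαβ => exact hαβ.mentioned.1

theorem of_gEquiv (h : QPath load store C α w) (hαβ : GEquiv load store C α β) :
    QPath load store C β w := by
  cases h with
  | nil => exact .nil hαβ.mentioned.2
  | cons hαδ hδγ h => exact .cons (hαβ.symm.trans hαδ) hδγ h

theorem congr (h : GEquiv load store C α β) :
    QPath load store C α w ↔ QPath load store C β w :=
  ⟨fun hα => hα.of_gEquiv h, fun hβ => hβ.of_gEquiv h.symm⟩

theorem cons_iff (hαβ : GEquiv load store C α β) (hβγ : GEdge C β ℓ γ) :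
    QPath load store C α (ℓ :: w) ↔ QPath load store C γ w := by
  refine ⟨fun h => ?_, .cons hαβ hβγ⟩
  cases h with
  | cons hαδ hδε h => exact h.of_gEquiv (.congr hδε hβγ (hαδ.symm.trans hαβ) (.inl rfl))

theorem of_append (h : QPath load store C α (u ++ w)) : QPath load store C α u := by
  induction u generalizing α with
  | nil => exact .nil h.mentioned
  | cons ℓ u ih =>
    cases h with
    | cons hαβ hβγ h => exact .cons hαβ hβγ (ih h)

theorem append_store_iff_append_load (hload : QPath load store C α (u ++ [load]))
    (hstore : QPath load store C α (u ++ [store])) :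
    QPath load store C α (u ++ store :: w) ↔ QPath load store C α (u ++ load :: w) := by
  induction u generalizing α with
  | nil =>
    obtain _ | ⟨hαβ, hβγ, -⟩ := hload
    obtain _ | ⟨hαβ', hβγ', -⟩ := hstore
    have hγ := GEquiv.congr hβγ hβγ' (hαβ.symm.trans hαβ') (.inr ⟨rfl, rfl⟩)
    exact (cons_iff hαβ' hβγ').trans ((congr hγ).symm.trans (cons_iff hαβ hβγ).symm)
  | cons ℓ u ih =>
    obtain _ | ⟨hαβ, hβγ, hload⟩ := hload
    have hstore := (cons_iff hαβ hβγ).1 hstore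
    exact (cons_iff hαβ hβγ).trans ((ih hload hstore).trans (cons_iff hαβ hβγ).symm)

end QPath

/-- `X = τ.w` spells out a path of `G/∼`: there is a path with label sequence `w` starting at the
class of the base variable `τ`. -/
def SpellsPath (load store : L) (C : Set (Constraint V L)) (X : DTV V L) : Prop :=
  QPath load store C ⟨X.base, []⟩ X.word

namespace SpellsPath

variable {X Y : DTV V L}

theorem append_iff_qpath (hX : X ∈ Mentioned C) (w : List L) :
    SpellsPath load store C (X.append w) ↔ QPath load store C X w := by
  obtain ⟨τ, v⟩ := X
  induction v using List.reverseRecOn generalizing w with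
  | nil => exact Iff.rfl
  | append_singleton v ℓ ih =>
    have hv : (⟨τ, v⟩ : DTV V L) ∈ Mentioned C := mentioned_of_mentioned_app hX
    calc SpellsPath load store C (DTV.append ⟨τ, v ++ [ℓ]⟩ w)
        ↔ SpellsPath load store C (DTV.append ⟨τ, v⟩ (ℓ :: w)) := by
          rw [DTV.append_cons, DTV.app]
      _ ↔ QPath load store C ⟨τ, v⟩ (ℓ :: w) := ih (ℓ :: w) hv
      _ ↔ QPath load store C ⟨τ, v ++ [ℓ]⟩ w := QPath.cons_iff (.refl hv) ⟨hX, rfl⟩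

theorem of_mentioned (hX : X ∈ Mentioned C) : SpellsPath load store C X := by
  have hnil := (append_iff_qpath (load := load) (store := store) hX []).2 (.nil hX)
  rwa [DTV.append_nil] at hnil

theorem sameExtensions_of_gEquiv (h : GEquiv load store C X Y) :
    SameExtensions (SpellsPath load store C) X Y := fun w =>
  calc SpellsPath load store C (X.append w)
      ↔ QPath load store C X w := append_iff_qpath h.mentioned.1 w
    _ ↔ QPath load store C Y w := QPath.congr h
    _ ↔ SpellsPath load store C (Y.append w) := (append_iff_qpath h.mentioned.2 w).symm

theorem sameExtensions_store_load (hload : SpellsPath load store C (X.app load))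
    (hstore : SpellsPath load store C (X.app store)) :
    SameExtensions (SpellsPath load store C) (X.app store) (X.app load) := by
  intro w
  simp only [← DTV.append_cons]
  exact QPath.append_store_iff_append_load hload hstore

theorem holdsIn_of_mem {c : Constraint V L} (hc : c ∈ C) :
    c.HoldsIn (SpellsPath load store C) := by
  cases c with
  | var X => exact of_mentioned (mentioned_of_inConstraint hc rfl)
  | sub X Y =>
    have hXY : GEquiv load store C X Y := .base hc
    exact ⟨of_mentioned hXY.mentioned.1, sameExtensions_of_gEquiv hXY⟩

theorem of_entails_var (h : Entails sgn load store C (.var X)) : SpellsPath load store C X :=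
  h.holdsIn (fun _ => holdsIn_of_mem) (fun _ _ => QPath.of_append)
    (fun _ => sameExtensions_store_load)

end SpellsPath

theorem qpath_iff_entails_var_general {α : DTV V L} (hα : α ∈ Mentioned C) (u : List L) :
    QPath load store C α u ↔ Entails sgn load store C (.var (α.append u)) :=
  ⟨QPath.entails_var, fun h => (SpellsPath.append_iff_qpath hα u).1 (.of_entails_var h)⟩

end

/-- for a finite constraint set `𝒞` and a base type variable `τ`
of `𝒞`, there is a path through `G/∼` with label sequence `u` starting at the
equivalence class of `n(τ)` if and only if `𝒞 ⊢ VAR τ.u`. -/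
theorem qpath_iff_entails_var {V L : Type} (sgn : L → Sign)
    (load store : L) (hload : sgn load = .pos) (hstore : sgn store = .neg)
    (C : Set (Constraint V L)) (hC : C.Finite)
    (τ : V) (hτ : (⟨τ, []⟩ : DTV V L) ∈ Mentioned C) (u : List L) :
    QPath load store C ⟨τ, []⟩ u ↔
      Entails sgn load store C (.var ⟨τ, u⟩) :=
  qpath_iff_entails_var_general hτ u
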